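/- Let V be a vertex operator algebra and U a graded subspace of V such that V = U + C₁(V) and ⊕_{n≤0} V_{(n)} ⊆ U + ℂ1. Then V is linearly spanned by elements u¹_{n₁}···uʳ_{n_r}1 with r ∈ ℕ, uⁱ ∈ U, n_i ∈ ℤ; that is, U generates V as a vertex operator algebra. -/

import Mathlib

noncomputable section

/-- The generalized binomial coefficient `C(m, i)` for `m ∈ ℤ`, `i ∈ ℕ`,
as a complex number: `m(m-1)⋯(m-i+1)/i!`. -/
def cchoose (m : ℤ) (i : ℕ) : ℂ :=
  (∏ j ∈ Finset.range i, ((m : ℂ) - (j : ℂ))) / (Nat.factorial i : ℂ)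

/-- A vertex operator algebra `V = ⊕ₙ V₍ₙ₎` over `ℂ`.  The vertex operator map is
recorded through its modes `op u n v = uₙ v` (so `Y(u,x)v = Σₙ uₙv x^{-n-1}`), with
vacuum `one`, conformal vector `omega` (with `L(k) = ω_{k+1}`), central charge `cc`,
weight grading `wtSpace` with projections `proj`.  The Jacobi identity is recorded in
the equivalent form of the Borcherds identity on modes. -/
structure VOA where
  carrier : Type
  [grp : AddCommGroup carrier]
  [mdl : Module ℂ carrier]
  op : carrier → ℤ → carrier → carrier
  one : carrier
  omega : carrier
  wtSpace : ℤ → Submodule ℂ carrier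
  proj : ℤ → carrier → carrier
  cc : ℂ
  op_linear_left : ∀ (n : ℤ) (w : carrier), IsLinearMap ℂ fun u => op u n w
  op_linear_right : ∀ (u : carrier) (n : ℤ), IsLinearMap ℂ (op u n)
  trunc : ∀ u v : carrier, ∃ N : ℤ, ∀ n : ℤ, N ≤ n → op u n v = 0
  one_op : ∀ (n : ℤ) (v : carrier), op one n v = if n = -1 then v else 0
  create_nonneg : ∀ (v : carrier) (n : ℤ), 0 ≤ n → op v n one = 0
  create : ∀ v : carrier, op v (-1) one = v
  borcherds : ∀ (u v w : carrier) (l m n : ℤ),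
    (∑ᶠ i : ℕ, cchoose m i • op (op u (l + (i : ℤ)) v) (m + n - (i : ℤ)) w)
      = ∑ᶠ i : ℕ, ((-1 : ℂ) ^ i * cchoose l i) •
          (op u (l + m - (i : ℤ)) (op v (n + (i : ℤ)) w)
            - ((-1 : ℂ) ^ l) • op v (l + n - (i : ℤ)) (op u (m + (i : ℤ)) w))
  proj_linear : ∀ n : ℤ, IsLinearMap ℂ (proj n)
  proj_mem : ∀ (n : ℤ) (v : carrier), proj n v ∈ wtSpace n
  proj_eq : ∀ n : ℤ, ∀ v ∈ wtSpace n, proj n v = v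
  proj_ne : ∀ m n : ℤ, m ≠ n → ∀ v ∈ wtSpace m, proj n v = 0
  proj_finite : ∀ v : carrier, (Function.support fun n => proj n v).Finite
  proj_sum : ∀ v : carrier, (∑ᶠ n : ℤ, proj n v) = v
  fd : ∀ n : ℤ, FiniteDimensional ℂ (wtSpace n)
  lower_trunc : ∃ N : ℤ, ∀ n : ℤ, n < N → wtSpace n = ⊥
  one_wt : one ∈ wtSpace 0
  omega_wt : omega ∈ wtSpace 2
  op_wt : ∀ k m n : ℤ, ∀ u ∈ wtSpace k, ∀ v ∈ wtSpace m, op u n v ∈ wtSpace (k + m - n - 1)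
  L_zero : ∀ n : ℤ, ∀ v ∈ wtSpace n, op omega 1 v = (n : ℂ) • v
  L_neg_one : ∀ (u : carrier) (n : ℤ) (w : carrier),
    op (op omega 0 u) n w = (-(n : ℂ)) • op u (n - 1) w
  virasoro : ∀ (m n : ℤ) (v : carrier),
    op omega (m + 1) (op omega (n + 1) v) - op omega (n + 1) (op omega (m + 1) v)
      = ((m : ℂ) - (n : ℂ)) • op omega (m + n + 1) v
        + (if m + n = 0 then (((m : ℂ) ^ 3 - (m : ℂ)) / 12) * cc else 0) • v

attribute [instance] VOA.grp VOA.mdl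

namespace VOA

variable (V : VOA)

/-- The Virasoro operator `L(k) = ω_{k+1}`. -/
def L (k : ℤ) (v : V.carrier) : V.carrier := V.op V.omega (k + 1) v

/-- The positive-weight part `V₊ = ⊕_{n ≥ 1} V₍ₙ₎`. -/
def pos : Submodule ℂ V.carrier := ⨆ (n : ℤ) (_ : 1 ≤ n), V.wtSpace n

/-- Zhu's subspace `C₂(V) = span{u₋₂v : u, v ∈ V}`. -/
def C2 : Submodule ℂ V.carrier :=
  Submodule.span ℂ {x : V.carrier | ∃ u v : V.carrier, x = V.op u (-2) v}

/-- The subspace `C₁(V) = span(v₋₁V₊ (v ∈ V₊) together with L(-1)V)`. -/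
def C1 : Submodule ℂ V.carrier :=
  Submodule.span ℂ
    ({x : V.carrier | ∃ u ∈ V.pos, ∃ v ∈ V.pos, x = V.op u (-1) v}
      ∪ {x : V.carrier | ∃ v : V.carrier, x = V.op V.omega 0 v})

/-- Iterated application of modes: `iterApply [(u¹,n₁),…,(uʳ,n_r)] w = u¹_{n₁} ⋯ uʳ_{n_r} w`. -/
def iterApply : List (V.carrier × ℤ) → V.carrier → V.carrier
  | [], w => w
  | p :: l, w => V.op p.1 p.2 (iterApply l w)

/-- `U ⊆ V` generates `V` as a vertex operator algebra:  `V` is linearly spanned by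
the elements `u¹_{n₁} ⋯ uʳ_{n_r} 1` with `uⁱ ∈ U`, `n_i ∈ ℤ`. -/
def generates (U : Set V.carrier) : Prop :=
  Submodule.span ℂ {x : V.carrier | ∃ l : List (V.carrier × ℤ),
    (∀ p ∈ l, p.1 ∈ U) ∧ x = V.iterApply l V.one} = ⊤

/-- `V` is finitely generated as a vertex operator algebra. -/
def FinitelyGenerated : Prop := ∃ S : Finset V.carrier, V.generates ↑S

end VOA

/-- A weak `V`-module: all axioms of a module (truncation, vacuum, Jacobi identity in
Borcherds form) except those involving gradings. -/
structure WeakModule (V : VOA) where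
  carrier : Type
  [grp : AddCommGroup carrier]
  [mdl : Module ℂ carrier]
  op : V.carrier → ℤ → carrier → carrier
  op_linear_left : ∀ (n : ℤ) (w : carrier), IsLinearMap ℂ fun u => op u n w
  op_linear_right : ∀ (u : V.carrier) (n : ℤ), IsLinearMap ℂ (op u n)
  trunc : ∀ (u : V.carrier) (w : carrier), ∃ N : ℤ, ∀ n : ℤ, N ≤ n → op u n w = 0
  one_op : ∀ (n : ℤ) (w : carrier), op V.one n w = if n = -1 then w else 0
  borcherds : ∀ (u v : V.carrier) (w : carrier) (l m n : ℤ),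
    (∑ᶠ i : ℕ, cchoose m i • op (V.op u (l + (i : ℤ)) v) (m + n - (i : ℤ)) w)
      = ∑ᶠ i : ℕ, ((-1 : ℂ) ^ i * cchoose l i) •
          (op u (l + m - (i : ℤ)) (op v (n + (i : ℤ)) w)
            - ((-1 : ℂ) ^ l) • op v (l + n - (i : ℤ)) (op u (m + (i : ℤ)) w))

attribute [instance] WeakModule.grp WeakModule.mdl

namespace WeakModule

variable {V : VOA} (W : WeakModule V)

/-- `L(0)` acting on a weak module, as a linear map. -/
def L0 : W.carrier →ₗ[ℂ] W.carrier := IsLinearMap.mk' _ (W.op_linear_right V.omega 1)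

/-- The `L(0)`-eigenspace of eigenvalue `h`. -/
def eig (h : ℂ) : Submodule ℂ W.carrier :=
  LinearMap.ker (W.L0 - h • (LinearMap.id : W.carrier →ₗ[ℂ] W.carrier))

/-- The coefficient `v*ₙ` of the adjoint vertex operator
`⟨Y*(v,x)α, w⟩ = ⟨α, Y(e^{xL(1)}(-x^{-2})^{L(0)}v, x^{-1})w⟩` acting on the full dual
space: for `v` homogeneous of weight `h`,
`(v*ₙ α)(w) = (-1)^h Σ_{i≥0} (1/i!) α((L(1)^i v)_{2h-n-i-2} w)`, extended to general
`v` via the weight-space projections. -/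
def dmode (v : V.carrier) (n : ℤ) (α : W.carrier → ℂ) (w : W.carrier) : ℂ :=
  ∑ᶠ h : ℤ, ∑ᶠ i : ℕ,
    ((-1 : ℂ) ^ h / (Nat.factorial i : ℂ)) *
      α (W.op ((V.L 1)^[i] (V.proj h v)) (2 * h - n - (i : ℤ) - 2) w)

/-- `D(W) ⊆ W*`: the linear functionals `α` on `W` such that for every `v ∈ V`,
`Y*(v,x)α ∈ W*((x))`, i.e. `v*ₙ α = 0` for `n` sufficiently large. -/
def DW : Set (W.carrier → ℂ) :=
  {α | IsLinearMap ℂ α ∧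
    ∀ v : V.carrier, ∃ N : ℤ, ∀ n : ℤ, N ≤ n → ∀ w : W.carrier, W.dmode v n α w = 0}

/-- A subspace stable under all modes of all vertex operators, i.e. a `V`-submodule. -/
def IsStable (S : Submodule ℂ W.carrier) : Prop :=
  ∀ (v : V.carrier) (n : ℤ), ∀ m ∈ S, W.op v n m ∈ S

/-- An irreducible (nonzero, no proper nonzero stable subspaces) `V`-submodule. -/
def IsIrreducibleSub (S : Submodule ℂ W.carrier) : Prop :=
  S ≠ ⊥ ∧ W.IsStable S ∧
    ∀ T : Submodule ℂ W.carrier, W.IsStable T → T ≤ S → T = ⊥ ∨ T = S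

/-- A stable subspace which is an ordinary module: `L(0)` acts semisimply on it with
finite-dimensional eigenspaces, and for each `h` the eigenvalues `h + m` do not occur
for `m` a sufficiently negative integer. -/
def IsOrdinarySub (S : Submodule ℂ W.carrier) : Prop :=
  S ≤ (⨆ h : ℂ, W.eig h ⊓ S) ∧ (∀ h : ℂ, FiniteDimensional ℂ ↥(W.eig h ⊓ S)) ∧
    ∀ h : ℂ, ∃ N : ℤ, ∀ m : ℤ, m ≤ N → W.eig (h + (m : ℂ)) ⊓ S = ⊥

/-- The weak module `W` is irreducible. -/
def IsIrreducible : Prop :=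
  (⊥ : Submodule ℂ W.carrier) ≠ ⊤ ∧
    ∀ S : Submodule ℂ W.carrier, W.IsStable S → S = ⊥ ∨ S = ⊤

/-- `Cₙ(W) = span{v₋ₙw : v ∈ V, w ∈ W}`. -/
def Cn (n : ℤ) : Submodule ℂ W.carrier :=
  Submodule.span ℂ {x : W.carrier | ∃ (v : V.carrier) (w : W.carrier), x = W.op v (-n) w}

/-- `B(W) = span(u₋₁W (u ∈ V₊) together with v₀W (v homogeneous, wt v ≥ 2))`. -/
def BW : Submodule ℂ W.carrier :=
  Submodule.span ℂ
    ({x : W.carrier | ∃ v ∈ V.pos, ∃ w : W.carrier, x = W.op v (-1) w}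
      ∪ {x : W.carrier | ∃ k : ℤ, 2 ≤ k ∧ ∃ v ∈ V.wtSpace k, ∃ w : W.carrier, x = W.op v 0 w})

/-- Zhu's subspace `O(W) = span{Σ_{i≥0} C(wt v, i) v_{i-2} w}` so that `A(W) = W/O(W)`. -/
def OW : Submodule ℂ W.carrier :=
  Submodule.span ℂ
    {x : W.carrier | ∃ (k : ℤ) (v : V.carrier), v ∈ V.wtSpace k ∧
      ∃ w : W.carrier, x = ∑ᶠ i : ℕ, cchoose k i • W.op v ((i : ℤ) - 2) w}

/-- A subspace `T ⊇ O(W)` of `W` is closed under the Frenkel–Zhu left and right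
`A(V)`-actions `v * w = Σᵢ C(wt v, i) v_{i-1} w` and `w * v = Σᵢ C(wt v - 1, i) v_{i-1} w`;
for `T ⊇ O(W)` this expresses that `T/O(W)` is an `A(V)`-sub-bimodule of `A(W)`. -/
def BimoduleClosed (T : Submodule ℂ W.carrier) : Prop :=
  ∀ k : ℤ, ∀ v ∈ V.wtSpace k, ∀ w ∈ T,
    (∑ᶠ i : ℕ, cchoose k i • W.op v ((i : ℤ) - 1) w) ∈ T ∧
    (∑ᶠ i : ℕ, cchoose (k - 1) i • W.op v ((i : ℤ) - 1) w) ∈ T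

/-- Equivalence (isomorphism) of weak modules. -/
def Equiv (M N : WeakModule V) : Prop :=
  ∃ e : M.carrier ≃ₗ[ℂ] N.carrier,
    ∀ (v : V.carrier) (n : ℤ) (w : M.carrier), e (M.op v n w) = N.op v n (e w)

end WeakModule

/-- `V` is of class 𝒜: `L(0)` acts semisimply on every weak `V`-module. -/
def VOA.classA (V : VOA) : Prop :=
  ∀ M : WeakModule V, (⨆ h : ℂ, M.eig h) = ⊤

/-- `V` is regular: every weak `V`-module is a direct sum of irreducible ordinary
`V`-modules. -/
def VOA.regular (V : VOA) : Prop :=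
  ∀ M : WeakModule V, ∃ (ι : Type) (S : ι → Submodule ℂ M.carrier),
    (∀ i, M.IsIrreducibleSub (S i) ∧ M.IsOrdinarySub (S i)) ∧
    (∀ i, Disjoint (S i) (⨆ (j : ι) (_ : j ≠ i), S j)) ∧ (⨆ i, S i) = ⊤

/-- A generalized `V`-module: a weak module with a semisimple `L(0)`-action, graded by
the `L(0)`-eigenvalues, with weight-space projections `projW`. -/
structure GenModule (V : VOA) extends WeakModule V where
  wt : ℂ → Submodule ℂ carrier
  projW : ℂ → carrier → carrier
  projW_linear : ∀ h : ℂ, IsLinearMap ℂ (projW h)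
  projW_mem : ∀ (h : ℂ) (w : carrier), projW h w ∈ wt h
  projW_eq : ∀ h : ℂ, ∀ w ∈ wt h, projW h w = w
  projW_ne : ∀ g h : ℂ, g ≠ h → ∀ w ∈ wt g, projW h w = 0
  projW_finite : ∀ w : carrier, (Function.support fun h => projW h w).Finite
  projW_sum : ∀ w : carrier, (∑ᶠ h : ℂ, projW h w) = w
  wt_L0 : ∀ h : ℂ, ∀ w ∈ wt h, op V.omega 1 w = h • w
  wt_op : ∀ k : ℤ, ∀ v ∈ V.wtSpace k, ∀ (h : ℂ) (n : ℤ), ∀ w ∈ wt h,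
    op v n w ∈ wt (h + (k : ℂ) - (n : ℂ) - 1)

/-- An ordinary `V`-module: a generalized module whose weight spaces are
finite-dimensional and whose weights are truncated from below in each coset `h + ℤ`. -/
structure OrdModule (V : VOA) extends GenModule V where
  wt_fd : ∀ h : ℂ, FiniteDimensional ℂ ↥(wt h)
  wt_lower : ∀ h : ℂ, ∃ N : ℤ, ∀ m : ℤ, m ≤ N → wt (h + (m : ℂ)) = ⊥

namespace GenModule

variable {V : VOA} (W : GenModule V)

/-- `W₊ = ⊕_{Re h > 0} W₍ₕ₎`. -/
def posW : Submodule ℂ W.carrier := ⨆ (h : ℂ) (_ : 0 < h.re), W.wt h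

/-- `C₁(W) = span(v₋₁W₊ (v ∈ V₊) together with L(-1)W)`. -/
def C1W : Submodule ℂ W.carrier :=
  Submodule.span ℂ
    ({x : W.carrier | ∃ v ∈ V.pos, ∃ w ∈ W.posW, x = W.op v (-1) w}
      ∪ {x : W.carrier | ∃ w : W.carrier, x = W.op V.omega 0 w})

/-- The restricted dual `W' = ⊕ₕ W₍ₕ₎* ⊆ W*`: the linear functionals vanishing on all
but finitely many weight spaces. -/
def restrictedDual : Set (W.carrier → ℂ) :=
  {α | IsLinearMap ℂ α ∧ {h : ℂ | ∃ w ∈ W.wt h, α w ≠ 0}.Finite}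

end GenModule

/-- `D(W)⁰`: the sum of the `L(0)`-eigenspaces of the weak module `D(W) ⊆ W*`, where
`L*(0) = ω*₁` acts on `α ∈ W*` by `(L*(0)α)(w) = α(L(0)w)`. -/
def OrdModule.DW0 {V : VOA} (W : OrdModule V) : Set (W.carrier → ℂ) :=
  {α | ∃ (S : Finset ℂ) (f : ℂ → (W.carrier → ℂ)),
    (∀ h ∈ S, f h ∈ W.toWeakModule.DW ∧
      ∀ w : W.carrier, f h (W.op V.omega 1 w) = h * f h w) ∧
    α = ∑ h ∈ S, f h}

/-- An ℕ-gradable weak `V`-module: a weak module with an ℕ-grading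
`W = ⊕_{n∈ℕ} W(n)` with `v_m W(n) ⊆ W(wt v + n - m - 1)` (graded pieces of negative
index are zero). -/
structure NGradedModule (V : VOA) extends WeakModule V where
  gr : ℤ → Submodule ℂ carrier
  gr_neg : ∀ n : ℤ, n < 0 → gr n = ⊥
  gr_sup : (⨆ n : ℤ, gr n) = ⊤
  gr_indep : ∀ n : ℤ, Disjoint (gr n) (⨆ (m : ℤ) (_ : m ≠ n), gr m)
  gr_op : ∀ k : ℤ, ∀ v ∈ V.wtSpace k, ∀ m n : ℤ, ∀ w ∈ gr n,
    op v m w ∈ gr (k + n - m - 1)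

/-- An intertwining operator of type `(W₃; W₁ W₂)` in the sense of
Frenkel–Huang–Lepowsky, recorded through its complex-indexed modes
`I w₁ h w₂ = (w₁)ₕ w₂` (so `Y(w₁,x)w₂ = Σ_{h∈ℂ} (w₁)ₕ w₂ x^{-h-1}`):
linearity, truncation, the `L(-1)`-derivative property, and the Jacobi identity in
component (Borcherds) form. -/
def IsIntertwiner {V : VOA} (W1 W2 W3 : OrdModule V)
    (I : W1.carrier → ℂ → W2.carrier → W3.carrier) : Prop :=
  (∀ (h : ℂ) (w2 : W2.carrier), IsLinearMap ℂ fun w1 => I w1 h w2) ∧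
  (∀ (w1 : W1.carrier) (h : ℂ), IsLinearMap ℂ (I w1 h)) ∧
  (∀ (w1 : W1.carrier) (w2 : W2.carrier) (h : ℂ),
    ∃ N : ℤ, ∀ n : ℤ, N ≤ n → I w1 (h + (n : ℂ)) w2 = 0) ∧
  (∀ (w1 : W1.carrier) (h : ℂ) (w2 : W2.carrier),
    I (W1.op V.omega 0 w1) h w2 = (-h) • I w1 (h - 1) w2) ∧
  (∀ (u : V.carrier) (w1 : W1.carrier) (w2 : W2.carrier) (l m : ℤ) (h : ℂ),
    (∑ᶠ i : ℕ, cchoose m i • I (W1.op u (l + (i : ℤ)) w1) ((m : ℂ) + h - (i : ℂ)) w2)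
      = ∑ᶠ i : ℕ, ((-1 : ℂ) ^ i * cchoose l i) •
          (W3.op u (l + m - (i : ℤ)) (I w1 (h + (i : ℂ)) w2)
            - ((-1 : ℂ) ^ l) • I w1 ((l : ℂ) + h - (i : ℂ)) (W2.op u (m + (i : ℤ)) w2)))

/-- The fusion rule `dim I(W₃; W₁W₂)` is finite: the space of intertwining operators of
the indicated type is finite-dimensional. -/
def FusionFinite {V : VOA} (W1 W2 W3 : OrdModule V) : Prop :=
  FiniteDimensional ℂ
    ↥(Submodule.span ℂ {I : W1.carrier → ℂ → W2.carrier → W3.carrier |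
        IsIntertwiner W1 W2 W3 I})

end

/-! The vectors all of whose modes preserve a given subspace form a subspace `T`, closed under
products by the iterate formula and under `L(-1)` by the derivative formula. Take the subspace
spanned by the iterated modes of `U` on the vacuum. Every weight space lies in `T`, by induction on
the weight `k` starting where the grading is truncated: modulo `U`, the weight `k` component of
`C₁(V)` is spanned by vectors `u₋₁v` with `u`, `v` of weights in `[1, k)` and vectors `L(-1)v` with
`v` of weight `k - 1`. Finally `v = v₋₁1`. -/

theorem cchoose_zero_right (m : ℤ) : cchoose m 0 = 1 := by simp [cchoose]

theorem cchoose_zero_left_of_ne_zero {i : ℕ} (hi : i ≠ 0) : cchoose 0 i = 0 := by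
  have hprod : ∏ j ∈ Finset.range i, (((0 : ℤ) : ℂ) - (j : ℂ)) = 0 :=
    Finset.prod_eq_zero (Finset.mem_range.2 (Nat.pos_of_ne_zero hi)) (by simp)
  rw [cchoose, hprod, zero_div]

namespace VOA

variable (V : VOA)

/-- The `n`-th product `(u, v) ↦ uₙ v` as a bilinear map. -/
def opₗ (n : ℤ) : V.carrier →ₗ[ℂ] V.carrier →ₗ[ℂ] V.carrier :=
  LinearMap.mk₂ ℂ (fun u v => V.op u n v)
    (fun u u' v => (V.op_linear_left n v).map_add u u')
    (fun c u v => (V.op_linear_left n v).map_smul c u)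
    (fun u v v' => (V.op_linear_right u n).map_add v v')
    (fun c u v => (V.op_linear_right u n).map_smul c v)

/-- The projection of `V` onto the weight space `V₍ₙ₎` as a linear map. -/
def projₗ (n : ℤ) : V.carrier →ₗ[ℂ] V.carrier := (V.proj_linear n).mk' _

/-- The span of the vectors `u¹_{n₁} ⋯ uʳ_{n_r} 1` with `uⁱ ∈ S`. -/
def modeSpan (S : Set V.carrier) : Submodule ℂ V.carrier :=
  Submodule.span ℂ {x | ∃ l : List (V.carrier × ℤ), (∀ p ∈ l, p.1 ∈ S) ∧ x = V.iterApply l V.one}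

/-- The vectors all of whose modes preserve the subspace `W`. -/
def modeStabilizer (W : Submodule ℂ V.carrier) : Submodule ℂ V.carrier where
  carrier := {v | ∀ n : ℤ, ∀ w ∈ W, V.op v n w ∈ W}
  add_mem' {u v} hu hv n w hw := by
    rw [(V.op_linear_left n w).map_add]
    exact W.add_mem (hu n w hw) (hv n w hw)
  zero_mem' n w _ := by
    rw [(V.op_linear_left n w).map_zero]
    exact W.zero_mem
  smul_mem' c v hv n w hw := by
    rw [(V.op_linear_left n w).map_smul]
    exact W.smul_mem c (hv n w hw)

theorem op_op_eq_finsum (u v w : V.carrier) (l n : ℤ) :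
    V.op (V.op u l v) n w = ∑ᶠ i : ℕ, ((-1 : ℂ) ^ i * cchoose l i) •
      (V.op u (l - i) (V.op v (n + i) w) - (-1 : ℂ) ^ l • V.op v (l + n - i) (V.op u i w)) := by
  have hborcherds := V.borcherds u v w l 0 n
  rw [finsum_eq_single _ 0 fun i hi => by rw [cchoose_zero_left_of_ne_zero hi, zero_smul]]
    at hborcherds
  simpa only [cchoose_zero_right, one_smul, Nat.cast_zero, add_zero, zero_add, sub_zero]
    using hborcherds

section ModeStabilizer

variable {V} {W : Submodule ℂ V.carrier}

theorem op_mem_modeStabilizer {u v : V.carrier} (hu : u ∈ V.modeStabilizer W)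
    (hv : v ∈ V.modeStabilizer W) (l : ℤ) : V.op u l v ∈ V.modeStabilizer W := by
  intro n w hw
  rw [op_op_eq_finsum]
  refine finsum_induction (· ∈ W) W.zero_mem (fun _ _ => W.add_mem) fun i => ?_
  exact W.smul_mem _ (W.sub_mem (hu _ _ (hv _ _ hw)) (W.smul_mem _ (hv _ _ (hu _ _ hw))))

theorem op_omega_zero_mem_modeStabilizer {v : V.carrier} (hv : v ∈ V.modeStabilizer W) :
    V.op V.omega 0 v ∈ V.modeStabilizer W := by
  intro n w hw
  rw [V.L_neg_one]
  exact W.smul_mem _ (hv _ _ hw)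

end ModeStabilizer

theorem one_mem_modeSpan (S : Set V.carrier) : V.one ∈ V.modeSpan S :=
  Submodule.subset_span ⟨[], by simp, rfl⟩

theorem subset_modeStabilizer_modeSpan (S : Set V.carrier) :
    S ⊆ V.modeStabilizer (V.modeSpan S) := by
  intro u hu n
  suffices h : V.modeSpan S ≤ (V.modeSpan S).comap (V.opₗ n u) from fun w hw => h hw
  refine Submodule.span_le.2 ?_
  rintro _ ⟨l, hl, rfl⟩
  exact Submodule.subset_span ⟨(u, n) :: l, List.forall_mem_cons.2 ⟨hu, hl⟩, rfl⟩

theorem generates_of_modeStabilizer_modeSpan_eq_top {S : Set V.carrier}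
    (h : V.modeStabilizer (V.modeSpan S) = ⊤) : V.generates S := by
  refine (Submodule.eq_top_iff' (p := V.modeSpan S)).2 fun v => ?_
  have hv : v ∈ V.modeStabilizer (V.modeSpan S) := h ▸ Submodule.mem_top
  rw [← V.create v]
  exact hv (-1) V.one (V.one_mem_modeSpan S)

theorem iSup_wtSpace : ⨆ n, V.wtSpace n = ⊤ := by
  refine (Submodule.eq_top_iff' ..).2 fun v => ?_
  rw [← V.proj_sum v]
  exact finsum_induction (· ∈ ⨆ n, V.wtSpace n) (Submodule.zero_mem _)
    (fun _ _ => Submodule.add_mem _) fun n => Submodule.mem_iSup_of_mem n (V.proj_mem n v)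

theorem C1_eq_map₂_sup_range :
    V.C1 = Submodule.map₂ (V.opₗ (-1)) V.pos V.pos ⊔ (V.opₗ 0 V.omega).range := by
  refine le_antisymm (Submodule.span_le.2 ?_) (sup_le (Submodule.map₂_le.2 ?_) ?_)
  · rintro _ (⟨u, hu, v, hv, rfl⟩ | ⟨v, rfl⟩)
    · exact Submodule.mem_sup_left (Submodule.apply_mem_map₂ _ hu hv)
    · exact Submodule.mem_sup_right ⟨v, rfl⟩
  · exact fun u hu v hv => Submodule.subset_span (Or.inl ⟨u, hu, v, hv, rfl⟩)
  · rintro _ ⟨v, rfl⟩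
    exact Submodule.subset_span (Or.inr ⟨v, rfl⟩)

section ProjC1

variable {V} {T : Submodule ℂ V.carrier} {k : ℤ}

theorem proj_mem_of_mem_wtSpace {j : ℤ} {x : V.carrier} (hx : x ∈ V.wtSpace j)
    (h : j = k → x ∈ T) : V.proj k x ∈ T := by
  rcases eq_or_ne j k with rfl | hjk
  · rw [V.proj_eq j x hx]
    exact h rfl
  · rw [V.proj_ne j k hjk x hx]
    exact T.zero_mem

theorem map₂_op_neg_one_pos_le_comap_proj
    (hop : ∀ u ∈ T, ∀ v ∈ T, V.op u (-1) v ∈ T) (hlt : ∀ j < k, V.wtSpace j ≤ T) :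
    Submodule.map₂ (V.opₗ (-1)) V.pos V.pos ≤ T.comap (V.projₗ k) := by
  simp only [pos, Submodule.map₂_iSup_left, Submodule.map₂_iSup_right, iSup_le_iff,
    Submodule.map₂_le]
  intro b hb a ha u hu v hv
  refine proj_mem_of_mem_wtSpace (V.op_wt _ _ (-1) u hu v hv) fun hweight => ?_
  exact hop u (hlt _ (by lia) hu) v (hlt _ (by lia) hv)

theorem range_op_omega_zero_le_comap_proj
    (hL : ∀ v ∈ T, V.op V.omega 0 v ∈ T) (hlt : ∀ j < k, V.wtSpace j ≤ T) :
    (V.opₗ 0 V.omega).range ≤ T.comap (V.projₗ k) := by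
  rw [LinearMap.range_eq_map, ← V.iSup_wtSpace, Submodule.map_iSup, iSup_le_iff]
  rintro j _ ⟨v, hv, rfl⟩
  refine proj_mem_of_mem_wtSpace (V.op_wt 2 j 0 _ V.omega_wt v hv) fun hweight => ?_
  exact hL v (hlt j (by lia) hv)

theorem proj_mem_of_mem_C1 (hop : ∀ u ∈ T, ∀ v ∈ T, V.op u (-1) v ∈ T)
    (hL : ∀ v ∈ T, V.op V.omega 0 v ∈ T) (hlt : ∀ j < k, V.wtSpace j ≤ T)
    {x : V.carrier} (hx : x ∈ V.C1) : V.proj k x ∈ T := by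
  rw [C1_eq_map₂_sup_range] at hx
  exact sup_le (map₂_op_neg_one_pos_le_comap_proj hop hlt)
    (range_op_omega_zero_le_comap_proj hL hlt) hx

end ProjC1

variable {V}

theorem eq_top_of_sup_C1_eq_top {U T : Submodule ℂ V.carrier}
    (hUgraded : ∀ u ∈ U, ∀ n : ℤ, V.proj n u ∈ U) (hsum : U ⊔ V.C1 = ⊤) (hUT : U ≤ T)
    (hop : ∀ u ∈ T, ∀ v ∈ T, V.op u (-1) v ∈ T)
    (hL : ∀ v ∈ T, V.op V.omega 0 v ∈ T) : T = ⊤ := by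
  obtain ⟨N, hN⟩ := V.lower_trunc
  suffices hwt : ∀ k, V.wtSpace k ≤ T from top_unique (V.iSup_wtSpace ▸ iSup_le hwt)
  intro k
  induction k using Int.strongRec (m := N) with
  | lt k hk => exact hN k hk ▸ bot_le
  | ge k _ hlt =>
    intro v hv
    obtain ⟨u, hu, c, hc, rfl⟩ := Submodule.mem_sup.1 (hsum ▸ Submodule.mem_top : v ∈ U ⊔ V.C1)
    rw [← V.proj_eq k _ hv, (V.proj_linear k).map_add]
    exact T.add_mem (hUT (hUgraded u hu k)) (proj_mem_of_mem_C1 hop hL hlt hc)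

end VOA

theorem generates_of_compl_C1_general (V : VOA) (U : Submodule ℂ V.carrier)
    (hUgraded : ∀ u ∈ U, ∀ n : ℤ, V.proj n u ∈ U)
    (hsum : U ⊔ V.C1 = ⊤) :
    V.generates (U : Set V.carrier) :=
  V.generates_of_modeStabilizer_modeSpan_eq_top <|
    VOA.eq_top_of_sup_C1_eq_top hUgraded hsum (V.subset_modeStabilizer_modeSpan U)
      (fun _ hu _ hv => VOA.op_mem_modeStabilizer hu hv (-1))
      (fun _ hv => VOA.op_omega_zero_mem_modeStabilizer hv)

/-- Let `U` be a graded subspace of `V` with `V = U + C₁(V)` and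
`⊕_{n≤0} V₍ₙ₎ ⊆ U + ℂ1`.  Then `V` is linearly spanned by the elements
`u¹_{n₁} ⋯ uʳ_{n_r} 1` with `uⁱ ∈ U`, `nᵢ ∈ ℤ`; i.e. `U` generates `V` as a vertex
operator algebra. -/
theorem generates_of_compl_C1 (V : VOA) (U : Submodule ℂ V.carrier)
    (hUgraded : ∀ u ∈ U, ∀ n : ℤ, V.proj n u ∈ U)
    (hsum : U ⊔ V.C1 = ⊤)
    (hneg : ∀ n : ℤ, n ≤ 0 → V.wtSpace n ≤ U ⊔ Submodule.span ℂ {V.one}) :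
    V.generates (U : Set V.carrier) :=
  generates_of_compl_C1_general V U hUgraded hsum
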